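/- Given a positive integer m and a field K, there exist an integer n and a squarefree monomial ideal I ⊆ S = K[x_1,…,x_n] such that ν(I) = m and g_I(k) = 1 for all k = 1,…,m. -/

import Mathlib

open MvPolynomial

/-- The squarefree monomial `∏ i ∈ F, xᵢ`. -/
noncomputable def sqMon (K : Type) [Field K] {σ : Type} (F : Finset σ) :
    MvPolynomial σ K := ∏ i ∈ F, X i

/-- `I` is a squarefree monomial ideal if it is generated by squarefree monomials. -/
def IsSqfreeMonomialIdeal (K : Type) [Field K] {σ : Type}
    (I : Ideal (MvPolynomial σ K)) : Prop :=
  ∃ 𝒢 : Set (Finset σ), I = Ideal.span ((sqMon K) '' 𝒢)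

/-- The `k`-th squarefree power `I^[k]`: the ideal generated by all squarefree
monomials belonging to `I^k`. -/
noncomputable def sqfreePower (K : Type) [Field K] {σ : Type}
    (I : Ideal (MvPolynomial σ K)) (k : ℕ) : Ideal (MvPolynomial σ K) :=
  Ideal.span {m | ∃ F : Finset σ, m = sqMon K F ∧ m ∈ I ^ k}

/-- The monomial grade `ν(I)`: the largest `k` with `I^[k] ≠ (0)`. -/
noncomputable def monGrade (K : Type) [Field K] {σ : Type}
    (I : Ideal (MvPolynomial σ K)) : ℕ :=
  sSup {k | sqfreePower K I k ≠ ⊥}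

/-- The initial degree of a squarefree monomial ideal: the least degree of a
(squarefree) monomial belonging to it. -/
noncomputable def indeg (K : Type) [Field K] {σ : Type}
    (I : Ideal (MvPolynomial σ K)) : ℕ :=
  sInf {d | ∃ F : Finset σ, F.card = d ∧ sqMon K F ∈ I}

/-- The depth of `S/I` over the polynomial ring `S`: the longest length of a
regular sequence on `S/I` consisting of elements of the irrelevant maximal ideal. -/
noncomputable def polyDepth (K : Type) [Field K] {σ : Type}
    (I : Ideal (MvPolynomial σ K)) : ℕ :=
  sSup {k | ∃ rs : List (MvPolynomial σ K), rs.length = k ∧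
    (∀ r ∈ rs, r ∈ Ideal.span (Set.range (X : σ → MvPolynomial σ K))) ∧
    RingTheory.Sequence.IsRegular (MvPolynomial σ K ⧸ I) rs}

/-- The normalized depth function `g_I(k) = depth(S/I^[k]) - (indeg(I^[k]) - 1)`. -/
noncomputable def nDepth (K : Type) [Field K] {σ : Type}
    (I : Ideal (MvPolynomial σ K)) (k : ℕ) : ℤ :=
  (polyDepth K (sqfreePower K I k) : ℤ) - ((indeg K (sqfreePower K I k) : ℤ) - 1)

/-!
Take `I = (x_1, …, x_m)` in a polynomial ring `S` in `m + 1` variables. Its squarefree power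
`I^[k]` is the squarefree Veronese ideal of degree `k`, so its initial degree is `k`, and it remains
to see that `S ⧸ I^[k]` has depth `k`. The depth is at most the dimension, which is `k`: a prime
containing `I^[k]` contains all but at most `k` of the variables.

Conversely, the elementary symmetric polynomials `e_k, …, e_1` form a regular sequence. Deletion and
contraction of variables reduce weak regularity on a squarefree Veronese quotient of dimension `r`
to weak regularity on coordinate subspaces of dimension `r`. There `e_r` restricts to the product of
all coordinates, a nonzerodivisor, whose vanishing locus is again squarefree Veronese, of dimension
`r - 1`, so that induction on `r` applies to `e_{r-1}, …, e_1`.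
-/

open RingTheory.Sequence
open scoped Finset

section RegularSequence

open Module
open scoped Pointwise

variable {R M N P : Type*} [CommRing R] [AddCommGroup M] [Module R M] [AddCommGroup N] [Module R N]
  [AddCommGroup P] [Module R P]

lemma isWeaklyRegular_of_subsingleton [Subsingleton M] (rs : List R) : IsWeaklyRegular M rs := by
  induction rs generalizing M with
  | nil => exact .nil R M
  | cons r rs ih =>
    have : Subsingleton (QuotSMulTop r M) := (Submodule.mkQ_surjective _).subsingleton
    exact .cons (Function.injective_of_subsingleton _) ih

lemma map_quotSMulTop_injective_of_exact {f : M →ₗ[R] N} {g : N →ₗ[R] P} {r : R}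
    (hf : Function.Injective f) (hfg : Function.Exact f g) (hr : IsSMulRegular P r) :
    Function.Injective (QuotSMulTop.map r f) := by
  have h := QuotSMulTop.map_first_exact_on_four_term_exact_of_isSMulRegular_last
    ((LinearMap.exact_zero_iff_injective M f).2 hf) hfg hr
  rwa [map_zero, LinearMap.exact_zero_iff_injective] at h

lemma isWeaklyRegular_of_exact {f : M →ₗ[R] N} {g : N →ₗ[R] P} {rs : List R}
    (hf : Function.Injective f) (hfg : Function.Exact f g) (hg : Function.Surjective g)
    (hM : IsWeaklyRegular M rs) (hP : IsWeaklyRegular P rs) : IsWeaklyRegular N rs := by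
  induction rs generalizing M N P with
  | nil => exact .nil R N
  | cons r rs ih =>
    rw [isWeaklyRegular_cons_iff] at hM hP ⊢
    exact ⟨isSMulRegular_of_range_eq_ker hf hfg.linearMap_ker_eq.symm hM.1 hP.1,
      ih (map_quotSMulTop_injective_of_exact hf hfg hP.1) (QuotSMulTop.map_exact r hfg hg)
        (QuotSMulTop.map_surjective r hg) hM.2 hP.2⟩

lemma isWeaklyRegular_cons_congr_of_sub_mem_annihilator {r s : R}
    (h : r - s ∈ annihilator R M) (rs : List R) :
    IsWeaklyRegular M (r :: rs) ↔ IsWeaklyRegular M (s :: rs) := by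
  have hsmul (m : M) : r • m = s • m := by
    rw [← sub_eq_zero, ← sub_smul, mem_annihilator.1 h]
  have hreg : IsSMulRegular M r ↔ IsSMulRegular M s := by
    simp only [IsSMulRegular, hsmul]
  have htop : r • (⊤ : Submodule R M) = s • ⊤ := by
    ext m
    simp only [Submodule.mem_smul_pointwise_iff_exists, hsmul]
  rw [isWeaklyRegular_cons_iff, isWeaklyRegular_cons_iff, hreg]
  exact and_congr_right' ((Submodule.quotEquivOfEq _ _ htop).isWeaklyRegular_congr rs)

lemma isWeaklyRegular_quotient_cons {I : Ideal R} {r : R} {rs : List R} (hr : I.colon {r} ≤ I)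
    (hrs : IsWeaklyRegular (R ⧸ (I ⊔ Ideal.span {r})) rs) : IsWeaklyRegular (R ⧸ I) (r :: rs) := by
  have hmap : r • (⊤ : Submodule R (R ⧸ I)) = Submodule.map I.mkQ (Ideal.span {r}) := by
    rw [← I.range_mkQ, ← Submodule.map_top, ← Submodule.map_pointwise_smul,
      ← Submodule.ideal_span_singleton_smul, smul_eq_mul, Ideal.mul_top]
  refine .cons ?_ (((Submodule.quotEquivOfEq _ _ hmap).trans
    (Submodule.quotientQuotientEquivQuotientSup I _)).isWeaklyRegular_congr rs |>.2 hrs)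
  refine (isSMulRegular_quotient_iff_mem_of_smul_mem I r).2 fun a ha => hr ?_
  rwa [Submodule.mem_colon_singleton, smul_eq_mul, mul_comm]

/-- Proved with the exact sequence `0 → R ⧸ (I : f) → R ⧸ I → R ⧸ (I + (f)) → 0`, whose first map is
multiplication by `f`. -/
lemma isWeaklyRegular_quotient_of_colon {I : Ideal R} (f : R) {rs : List R}
    (hcolon : IsWeaklyRegular (R ⧸ I.colon {f}) rs)
    (hsup : IsWeaklyRegular (R ⧸ (I ⊔ Ideal.span {f})) rs) : IsWeaklyRegular (R ⧸ I) rs := by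
  let mulRight : R →ₗ[R] R ⧸ I := I.mkQ ∘ₗ LinearMap.toSpanSingleton R R f
  have hker : LinearMap.ker mulRight = I.colon {f} := by
    ext a
    simp [mulRight, Submodule.mem_colon_singleton, -map_mul, Ideal.Quotient.eq_zero_iff_mem]
  let φ : (R ⧸ I.colon {f}) →ₗ[R] R ⧸ I := Submodule.liftQ _ mulRight hker.ge
  have hφ : Function.Injective φ :=
    LinearMap.ker_eq_bot.1 (Submodule.ker_liftQ_eq_bot _ _ _ hker.le)
  have hrange (b : R) : I.mkQ b ∈ Set.range φ ↔ ∃ a, a * f - b ∈ I := by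
    rw [← φ.coe_range, SetLike.mem_coe, Submodule.range_liftQ]
    simp [mulRight, -map_mul, Ideal.Quotient.eq]
  have hle : I ≤ I ⊔ Ideal.span {f} := le_sup_left
  have hexact : Function.Exact φ (Submodule.factor hle) := by
    refine I.mkQ_surjective.forall.2 fun b => ?_
    rw [hrange, Submodule.factor_mk, Submodule.mkQ_apply, Submodule.Quotient.mk_eq_zero, sup_comm,
      Ideal.mem_span_singleton_sup]
    refine exists_congr fun a => ⟨?_, fun h => ⟨b - a * f, ?_, by ring⟩⟩
    · rintro ⟨i, hi, rfl⟩
      simpa using hi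
    · simpa using neg_mem h
  exact isWeaklyRegular_of_exact hφ hexact (Submodule.factor_surjective hle) hcolon hsup

lemma isRegular_quotient_of_forall_mem {I J : Ideal R} {rs : List R} (hJ : J ≠ ⊤) (hIJ : I ≤ J)
    (hrs : ∀ r ∈ rs, r ∈ J) (h : IsWeaklyRegular (R ⧸ I) rs) : IsRegular (R ⧸ I) rs := by
  refine ⟨h, fun htop => hJ ?_⟩
  have hle : (⊤ : Submodule R (R ⧸ I)) ≤ J • ⊤ :=
    htop.le.trans (Submodule.smul_mono_left (Ideal.span_le.2 hrs))
  rw [Ideal.smul_top_eq_map, Ideal.Quotient.algebraMap_eq] at hle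
  rw [← Ideal.map_eq_top_iff_of_ker_le (Ideal.Quotient.mk I) (by rwa [Ideal.mk_ker])
    (RingHom.isIntegral_of_surjective _ Ideal.Quotient.mk_surjective)]
  exact eq_top_iff.2 hle

lemma length_le_supportDim_of_isRegular [IsNoetherianRing R] [Module.Finite R M] {rs : List R}
    (h : IsRegular M rs) : rs.length ≤ supportDim R M := by
  induction rs generalizing M with
  | nil =>
    have := h.nontrivial
    simpa [supportDim] using Order.krullDim_nonneg_iff.2
      (nonempty_support_of_nontrivial (R := R) (M := M)).to_subtype
  | cons r rs ih =>
    obtain ⟨hr, hrs⟩ := (isRegular_cons_iff M r rs).1 h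
    calc ((r :: rs).length : WithBot ℕ∞) = rs.length + 1 := by simp
      _ ≤ supportDim R (QuotSMulTop r M) + 1 := by gcongr; exact ih hrs
      _ ≤ supportDim R M := supportDim_quotSMulTop_succ_le_of_notMem_minimalPrimes
        fun _ => hr.notMem_of_mem_minimalPrimes

lemma ringKrullDim_quotient_le_of_forall_isPrime {I : Ideal R} {d : WithBot ℕ∞}
    (h : ∀ p : Ideal R, p.IsPrime → I ≤ p → ringKrullDim (R ⧸ p) ≤ d) :
    ringKrullDim (R ⧸ I) ≤ d := by
  rw [ringKrullDim_quotient]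
  refine iSup_le fun l => le_trans ?_ (h l.head.1.asIdeal l.head.1.2 l.head.2)
  rw [ringKrullDim_quotient]
  exact Order.LTSeries.length_le_krullDim
    (α := PrimeSpectrum.zeroLocus (R := R) l.head.1.asIdeal)
    { length := l.length
      toFun := fun i => ⟨(l i).1, l.head_le i⟩
      step := l.step }

end RegularSequence

section SqMonIdeal

variable {σ : Type}

/-- The exponent vector of the squarefree monomial with support `F`. -/
noncomputable def sqfreeExponent (F : Finset σ) : σ →₀ ℕ := ∑ i ∈ F, Finsupp.single i 1

lemma sqfreeExponent_apply [DecidableEq σ] (F : Finset σ) (i : σ) :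
    sqfreeExponent F i = if i ∈ F then 1 else 0 := by
  simp [sqfreeExponent, Finsupp.finsetSum_apply, Finsupp.single_apply]

lemma support_sqfreeExponent (F : Finset σ) : (sqfreeExponent F).support = F := by
  classical
  ext i
  simp [sqfreeExponent_apply]

lemma support_add_sqfreeExponent [DecidableEq σ] (d : σ →₀ ℕ) (F : Finset σ) :
    (d + sqfreeExponent F).support = d.support ∪ F := by
  ext i
  simp [sqfreeExponent_apply, or_iff_not_imp_left]

lemma sqfreeExponent_le_iff {F : Finset σ} {d : σ →₀ ℕ} :
    sqfreeExponent F ≤ d ↔ F ⊆ d.support := by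
  classical
  simp only [Finsupp.le_iff, support_sqfreeExponent, Finset.subset_iff, Finsupp.mem_support_iff]
  refine forall₂_congr fun i hi => ?_
  simp [sqfreeExponent_apply, hi, Nat.one_le_iff_ne_zero]

variable (K : Type) [Field K]

lemma sqMon_eq_monomial (F : Finset σ) : sqMon K F = monomial (sqfreeExponent F) 1 := by
  rw [sqMon, sqfreeExponent, monomial_sum_one]
  rfl

lemma sqMon_singleton (i : σ) : sqMon K {i} = X i := by simp [sqMon]

/-- The ideal spanned by the squarefree monomials with support in `U`. -/
noncomputable def sqMonIdeal (U : Set (Finset σ)) : Ideal (MvPolynomial σ K) :=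
  Ideal.span (sqMon K '' U)

variable {K}

lemma sqMon_ne_zero (F : Finset σ) : sqMon K F ≠ 0 := by
  rw [sqMon_eq_monomial]
  exact monomial_eq_zero.not.2 one_ne_zero

lemma sqMon_dvd_sqMon {F G : Finset σ} (h : F ⊆ G) : sqMon K F ∣ sqMon K G :=
  Finset.prod_dvd_prod_of_subset _ _ _ h

lemma mem_sqMonIdeal {U : Set (Finset σ)} (hU : IsUpperSet U) {p : MvPolynomial σ K} :
    p ∈ sqMonIdeal K U ↔ ∀ d ∈ p.support, d.support ∈ U := by
  have hspan : sqMonIdeal K U =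
      Ideal.span ((fun d => monomial d (1 : K)) '' (sqfreeExponent '' U)) := by
    simp only [sqMonIdeal, Set.image_image, sqMon_eq_monomial]
  rw [hspan, mem_ideal_span_monomial_image]
  simp only [Set.exists_mem_image, sqfreeExponent_le_iff]
  exact forall₂_congr fun d _ => ⟨fun ⟨F, hF, h⟩ => hU h hF, fun h => ⟨_, h, subset_rfl⟩⟩

lemma sqMon_mem_sqMonIdeal {U : Set (Finset σ)} (hU : IsUpperSet U) {F : Finset σ} :
    sqMon K F ∈ sqMonIdeal K U ↔ F ∈ U := by
  classical
  rw [mem_sqMonIdeal hU, sqMon_eq_monomial, support_monomial, if_neg one_ne_zero]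
  simp [support_sqfreeExponent]

lemma sqMonIdeal_union (U V : Set (Finset σ)) :
    sqMonIdeal K (U ∪ V) = sqMonIdeal K U ⊔ sqMonIdeal K V := by
  simp only [sqMonIdeal, Set.image_union, Ideal.span_union]

lemma sqMonIdeal_Ici (A : Finset σ) : sqMonIdeal K (Set.Ici A) = Ideal.span {sqMon K A} := by
  refine le_antisymm (Ideal.span_le.2 ?_)
    ((Ideal.span_singleton_le_iff_mem _).2 (Ideal.subset_span ⟨A, Set.self_mem_Ici, rfl⟩))
  rintro _ ⟨F, hF, rfl⟩
  exact Ideal.mem_span_singleton.2 (sqMon_dvd_sqMon hF)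

lemma colon_sqMonIdeal [DecidableEq σ] {U : Set (Finset σ)} (hU : IsUpperSet U) (A : Finset σ) :
    (sqMonIdeal K U).colon {sqMon K A} = sqMonIdeal K ((· ∪ A) ⁻¹' U) := by
  have hUA : IsUpperSet ((· ∪ A) ⁻¹' U) :=
    hU.preimage fun _ _ h => Finset.union_subset_union_left h
  ext p
  rw [Submodule.mem_colon_singleton, smul_eq_mul, mem_sqMonIdeal hU, mem_sqMonIdeal hUA,
    sqMon_eq_monomial]
  simp only [mem_support_iff, Set.mem_preimage, ← support_add_sqfreeExponent]
  refine ⟨fun h d hd => h _ (by rwa [coeff_mul_monomial, mul_one]), fun h d hd => ?_⟩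
  rw [coeff_mul_monomial', mul_one] at hd
  obtain ⟨hle, hd⟩ := ite_ne_right_iff.1 hd
  simpa only [tsub_add_cancel_of_le hle] using h _ hd

end SqMonIdeal

section Depth

lemma ringKrullDim_quotient_le_add_card {R σ : Type*} [CommRing R] [IsNoetherianRing R]
    {I : Ideal (MvPolynomial σ R)} {G : Finset σ} (hG : ∀ i ∉ G, X i ∈ I) :
    ringKrullDim (MvPolynomial σ R ⧸ I) ≤ ringKrullDim R + #G := by
  let φ : MvPolynomial G R →ₐ[R] MvPolynomial σ R ⧸ I := aeval fun i => Ideal.Quotient.mk I (X i)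
  have hφ : φ.range = ⊤ := by
    rw [eq_top_iff, ← (AlgHom.range_eq_top _).2 (Ideal.Quotient.mkₐ_surjective R I),
      ← Algebra.map_top, ← adjoin_range_X, AlgHom.map_adjoin, Algebra.adjoin_le_iff]
    rintro _ ⟨_, ⟨i, rfl⟩, rfl⟩
    by_cases hi : i ∈ G
    · exact ⟨X ⟨i, hi⟩, by simp [φ]⟩
    · exact ⟨0, by simpa using (Ideal.Quotient.eq_zero_iff_mem.2 (hG i hi)).symm⟩
  refine (ringKrullDim_le_of_surjective φ.toRingHom ((AlgHom.range_eq_top _).1 hφ)).trans ?_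
  rw [ringKrullDim_of_isNoetherianRing]
  simp

variable {K : Type} [Field K] {σ : Type}

lemma ringKrullDim_quotient_sqMonIdeal_le [Finite σ] {U : Set (Finset σ)} {d : ℕ}
    (hd : ∀ F ∉ U, #F ≤ d) : ringKrullDim (MvPolynomial σ K ⧸ sqMonIdeal K U) ≤ d := by
  classical
  have := Fintype.ofFinite σ
  refine ringKrullDim_quotient_le_of_forall_isPrime fun p hp hle => ?_
  let G : Finset σ := {i | X i ∉ p}
  have hG : G ∉ U := fun hGU => by
    obtain ⟨i, hiG, hip⟩ := hp.prod_mem_iff.1 (hle (Ideal.subset_span ⟨G, hGU, rfl⟩))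
    exact (Finset.mem_filter.1 hiG).2 hip
  calc ringKrullDim (MvPolynomial σ K ⧸ p) ≤ ringKrullDim K + #G :=
        ringKrullDim_quotient_le_add_card fun i hi => by simpa [G] using hi
    _ = #G := by rw [ringKrullDim_eq_zero_of_field, zero_add]
    _ ≤ d := by exact_mod_cast hd G hG

variable [Finite σ] {I : Ideal (MvPolynomial σ K)}

lemma polyDepth_eq_of_isRegular {rs : List (MvPolynomial σ K)}
    (hmem : ∀ r ∈ rs, r ∈ idealOfVars σ K) (hrs : IsRegular (MvPolynomial σ K ⧸ I) rs)
    (hd : ringKrullDim (MvPolynomial σ K ⧸ I) ≤ rs.length) : polyDepth K I = rs.length := by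
  refine IsGreatest.csSup_eq ⟨⟨rs, rfl, hmem, hrs⟩, ?_⟩
  rintro _ ⟨rs', rfl, -, hrs'⟩
  have hle := (length_le_supportDim_of_isRegular hrs').trans_eq
    (Module.supportDim_quotient_eq_ringKrullDim I)
  exact_mod_cast hle.trans hd

end Depth

section Veronese

/-- The ideal of the coordinate subspace on which the variables in `T` vanish. -/
noncomputable def varIdeal (R : Type*) [CommSemiring R] {σ : Type*} (T : Finset σ) :
    Ideal (MvPolynomial σ R) :=
  Ideal.span (X '' (T : Set σ))

lemma varIdeal_insert (R : Type*) [CommSemiring R] {σ : Type*} [DecidableEq σ] (x : σ)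
    (T : Finset σ) : varIdeal R (insert x T) = varIdeal R T ⊔ Ideal.span {X x} := by
  rw [varIdeal, Finset.coe_insert, Set.image_insert_eq, Ideal.span_insert, sup_comm, varIdeal]

variable (K : Type) [Field K] {σ : Type}

lemma isSqfreeMonomialIdeal_varIdeal (T : Finset σ) : IsSqfreeMonomialIdeal K (varIdeal K T) := by
  refine ⟨(fun i => {i}) '' (T : Set σ), ?_⟩
  simp only [Set.image_image, sqMon_singleton, varIdeal]

variable [DecidableEq σ]

/-- The `k`-th squarefree Veronese ideal in the variables of `T`, generated by the squarefree
monomials of degree `k` in these variables. -/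
noncomputable def sqVeronese (T : Finset σ) (k : ℕ) : Ideal (MvPolynomial σ K) :=
  sqMonIdeal K {F | k ≤ #(F ∩ T)}

lemma isUpperSet_setOf_le_card_inter (T : Finset σ) (k : ℕ) : IsUpperSet {F | k ≤ #(F ∩ T)} :=
  fun _ _ h hk => hk.trans (Finset.card_le_card (Finset.inter_subset_inter_right h))

lemma sqVeronese_zero (T : Finset σ) : sqVeronese K T 0 = ⊤ :=
  (Ideal.eq_top_iff_one _).2 (Ideal.subset_span ⟨∅, Nat.zero_le _, by simp [sqMon]⟩)

lemma sqVeronese_one (T : Finset σ) : sqVeronese K T 1 = varIdeal K T := by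
  refine le_antisymm (Ideal.span_le.2 ?_) (Ideal.span_le.2 ?_)
  · rintro _ ⟨F, hF, rfl⟩
    obtain ⟨i, hi⟩ := Finset.one_le_card.1 hF
    rw [Finset.mem_inter] at hi
    exact Ideal.mem_of_dvd _ (Finset.dvd_prod_of_mem X hi.1) (Ideal.subset_span ⟨i, hi.2, rfl⟩)
  · rintro _ ⟨i, hi, rfl⟩
    rw [← sqMon_singleton]
    exact Ideal.subset_span ⟨{i}, by simp [Finset.singleton_inter_of_mem hi], rfl⟩

lemma sqVeronese_card (T : Finset σ) : sqVeronese K T #T = Ideal.span {sqMon K T} := by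
  rw [← sqMonIdeal_Ici, sqVeronese]
  congr 1
  ext F
  rw [Set.mem_Ici, ← Finset.inter_eq_right]
  exact ⟨Finset.eq_of_subset_of_card_le Finset.inter_subset_right, fun h => by simp [h]⟩

variable {K}

lemma sqVeronese_eq_bot_iff {T : Finset σ} {k : ℕ} : sqVeronese K T k = ⊥ ↔ #T < k := by
  refine ⟨fun h => ?_, fun h => Ideal.span_eq_bot.2 ?_⟩
  · by_contra! hk
    have hmem : sqMon K T ∈ sqVeronese K T k := Ideal.subset_span ⟨T, by simpa using hk, rfl⟩
    rw [h, Ideal.mem_bot] at hmem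
    exact sqMon_ne_zero T hmem
  · rintro _ ⟨F, hF, rfl⟩
    exact absurd (hF.trans (Finset.card_le_card Finset.inter_subset_right)) h.not_ge

lemma indeg_sqVeronese {T : Finset σ} {k : ℕ} (hk : k ≤ #T) : indeg K (sqVeronese K T k) = k := by
  simp only [indeg, sqVeronese, sqMon_mem_sqMonIdeal (isUpperSet_setOf_le_card_inter T k)]
  refine IsLeast.csInf_eq ⟨?_, ?_⟩
  · obtain ⟨F, hF, rfl⟩ := Finset.exists_subset_card_eq hk
    exact ⟨F, rfl, by simp [Finset.inter_eq_left.2 hF]⟩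
  · rintro _ ⟨F, rfl, h⟩
    exact h.trans (Finset.card_le_card Finset.inter_subset_left)

lemma sqMon_mem_varIdeal_pow_iff {T F : Finset σ} {k : ℕ} :
    sqMon K F ∈ varIdeal K T ^ k ↔ k ≤ #(F ∩ T) := by
  constructor
  · intro h
    let φ : MvPolynomial σ K →ₐ[K] Polynomial K := aeval fun i => if i ∈ T then Polynomial.X else 1
    have hφF : φ (sqMon K F) = Polynomial.X ^ #(F ∩ T) := by simp [φ, sqMon]
    have hφT : (varIdeal K T).map φ ≤ Ideal.span {Polynomial.X} := by
      rw [varIdeal, Ideal.map_span, Ideal.span_le]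
      rintro _ ⟨_, ⟨i, hi, rfl⟩, rfl⟩
      simp [φ, Finset.mem_coe.1 hi]
    have hmem : φ (sqMon K F) ∈ Ideal.span {Polynomial.X ^ k} := by
      rw [← Ideal.span_singleton_pow]
      refine Ideal.pow_right_mono hφT k ?_
      rw [← Ideal.map_pow]
      exact Ideal.mem_map_of_mem φ h
    rw [hφF, Ideal.mem_span_singleton] at hmem
    exact (pow_dvd_pow_iff Polynomial.X_ne_zero Polynomial.not_isUnit_X).1 hmem
  · intro h
    refine Ideal.pow_le_pow_right h (Ideal.mem_of_dvd _
      (sqMon_dvd_sqMon (Finset.inter_subset_left (s₂ := T))) ?_)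
    rw [sqMon, ← Finset.prod_const]
    exact Ideal.prod_mem_prod fun i hi =>
      Ideal.subset_span ⟨i, Finset.mem_of_mem_inter_right hi, rfl⟩

lemma sqfreePower_varIdeal (T : Finset σ) (k : ℕ) :
    sqfreePower K (varIdeal K T) k = sqVeronese K T k := by
  rw [sqfreePower, sqVeronese, sqMonIdeal]
  congr 1
  ext p
  constructor
  · rintro ⟨F, rfl, h⟩
    exact ⟨F, sqMon_mem_varIdeal_pow_iff.1 h, rfl⟩
  · rintro ⟨F, h, rfl⟩
    exact ⟨F, rfl, sqMon_mem_varIdeal_pow_iff.2 h⟩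

omit [DecidableEq σ] in
lemma monGrade_varIdeal (T : Finset σ) : monGrade K (varIdeal K T) = #T := by
  classical
  simp only [monGrade, sqfreePower_varIdeal, ne_eq, sqVeronese_eq_bot_iff, not_lt]
  exact csSup_Iic

lemma colon_sqVeronese_insert_sup_varIdeal {x : σ} {T Z : Finset σ} (hxT : x ∉ T) (hxZ : x ∉ Z)
    (k : ℕ) : (sqVeronese K (insert x T) (k + 1) ⊔ varIdeal K Z).colon {X x} =
      sqVeronese K T k ⊔ varIdeal K Z := by
  simp only [← sqVeronese_one, sqVeronese, ← sqMonIdeal_union, ← sqMon_singleton K x]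
  rw [colon_sqMonIdeal ((isUpperSet_setOf_le_card_inter _ _).union
    (isUpperSet_setOf_le_card_inter _ _))]
  congr 1
  ext F
  have hT : (F ∪ {x}) ∩ insert x T = insert x (F ∩ T) := by grind
  have hZ : (F ∪ {x}) ∩ Z = F ∩ Z := by grind
  rw [Set.mem_preimage, Set.mem_union, Set.mem_union, Set.mem_ofPred_eq, Set.mem_ofPred_eq, hT, hZ,
    Finset.card_insert_of_notMem (by simp [hxT]), add_le_add_iff_right]
  rfl

lemma sqVeronese_insert_sup_span_X (x : σ) (T : Finset σ) (k : ℕ) :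
    sqVeronese K (insert x T) k ⊔ Ideal.span {X x} = sqVeronese K T k ⊔ Ideal.span {X x} := by
  simp only [← sqMon_singleton K x, ← sqMonIdeal_Ici, sqVeronese, ← sqMonIdeal_union]
  congr 1
  ext F
  by_cases hx : x ∈ F
  · simp [hx]
  · simp [hx, Finset.inter_insert_of_notMem hx]

end Veronese

section DeletionContraction

variable {K : Type} [Field K] {σ : Type} [Fintype σ] [DecidableEq σ]

/-- Deleting a variable `x` from `T` lowers `k` in the colon ideal by `x` and moves `x` to `Z` in
the sum with `(x)`, as in Pascal's rule; both preserve `#(T ∪ Z)ᶜ + k`. -/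
lemma isWeaklyRegular_sqVeronese_sup_varIdeal {rs : List (MvPolynomial σ K)} {r : ℕ}
    (h : ∀ Z : Finset σ, #Zᶜ = r → IsWeaklyRegular (MvPolynomial σ K ⧸ varIdeal K Z) rs)
    {T Z : Finset σ} (hTZ : Disjoint T Z) {k : ℕ} (hk : k ≤ #T + 1)
    (hr : #(T ∪ Z)ᶜ + k = r + 1) :
    IsWeaklyRegular (MvPolynomial σ K ⧸ (sqVeronese K T k ⊔ varIdeal K Z)) rs := by
  induction T using Finset.induction_on generalizing k Z with
  | empty =>
    obtain _ | k := k
    · rw [sqVeronese_zero, top_sup_eq]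
      exact isWeaklyRegular_of_subsingleton rs
    · obtain rfl : k = 0 := by simpa using hk
      rw [sqVeronese_eq_bot_iff.2 (by simp), bot_sup_eq]
      exact h Z (by simpa using hr)
  | insert x T hxT ih =>
    obtain _ | k := k
    · rw [sqVeronese_zero, top_sup_eq]
      exact isWeaklyRegular_of_subsingleton rs
    rw [Finset.card_insert_of_notMem hxT] at hk
    obtain ⟨hxZ, hTZ⟩ := Finset.disjoint_insert_left.1 hTZ
    have hcard : #(T ∪ Z)ᶜ = #(insert x T ∪ Z)ᶜ + 1 := by
      rw [Finset.insert_union, Finset.compl_insert, Finset.card_erase_add_one]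
      simp [hxT, hxZ]
    obtain hlt | hk := hk.lt_or_eq
    · refine isWeaklyRegular_quotient_of_colon (X x) ?_ ?_
      · rw [colon_sqVeronese_insert_sup_varIdeal hxT hxZ]
        exact ih hTZ (by lia) (by lia)
      · rw [sup_right_comm, sqVeronese_insert_sup_span_X, sup_right_comm, sup_assoc,
          ← varIdeal_insert]
        refine ih (Finset.disjoint_insert_right.2 ⟨hxT, hTZ⟩) (by lia) ?_
        rw [← hr, Finset.union_insert, Finset.insert_union]
    · rw [sqVeronese_eq_bot_iff.2 (by rw [Finset.card_insert_of_notMem hxT]; lia), bot_sup_eq]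
      refine h Z ?_
      have := Finset.card_union_of_disjoint hTZ
      have := Finset.card_compl_add_card (T ∪ Z)
      have := Finset.card_compl_add_card Z
      lia

end DeletionContraction

section Esymm

/-- The elementary symmetric polynomials `e_r, …, e_1`, in this order. -/
noncomputable def esymmSeq (σ R : Type*) [CommSemiring R] [Fintype σ] (r : ℕ) :
    List (MvPolynomial σ R) :=
  (List.range r).reverse.map fun i => esymm σ R (i + 1)

lemma length_esymmSeq (σ R : Type*) [CommSemiring R] [Fintype σ] (r : ℕ) :
    (esymmSeq σ R r).length = r := by
  simp [esymmSeq]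

lemma esymmSeq_succ (σ R : Type*) [CommSemiring R] [Fintype σ] (r : ℕ) :
    esymmSeq σ R (r + 1) = esymm σ R (r + 1) :: esymmSeq σ R r := by
  simp [esymmSeq, List.range_succ]

lemma esymm_mem_idealOfVars (σ R : Type*) [CommSemiring R] [Fintype σ] {n : ℕ} (hn : n ≠ 0) :
    esymm σ R n ∈ idealOfVars σ R := by
  refine sum_mem fun F hF => ?_
  obtain ⟨i, hi⟩ := Finset.card_ne_zero.1 ((Finset.mem_powersetCard.1 hF).2.trans_ne hn)
  exact Ideal.mem_of_dvd _ (Finset.dvd_prod_of_mem X hi) (Ideal.subset_span ⟨i, rfl⟩)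

lemma mem_idealOfVars_of_mem_esymmSeq {σ R : Type*} [CommSemiring R] [Fintype σ] {r : ℕ}
    {f : MvPolynomial σ R} (hf : f ∈ esymmSeq σ R r) : f ∈ idealOfVars σ R := by
  obtain ⟨i, -, rfl⟩ := List.mem_map.1 hf
  exact esymm_mem_idealOfVars σ R i.succ_ne_zero

lemma idealOfVars_ne_top (σ R : Type*) [CommSemiring R] [Nontrivial R] : idealOfVars σ R ≠ ⊤ := by
  have hle : idealOfVars σ R ≤ RingHom.ker constantCoeff := by
    rw [Ideal.span_le]
    rintro _ ⟨i, rfl⟩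
    simp
  exact fun h => RingHom.ker_ne_top constantCoeff (top_unique (h ▸ hle))

variable {K : Type} [Field K] {σ : Type}

lemma sqMonIdeal_le_idealOfVars {U : Set (Finset σ)} (hU : ∅ ∉ U) :
    sqMonIdeal K U ≤ idealOfVars σ K := by
  refine Ideal.span_le.2 ?_
  rintro _ ⟨F, hF, rfl⟩
  obtain ⟨i, hi⟩ := Finset.nonempty_iff_ne_empty.2 (ne_of_mem_of_not_mem hF hU)
  exact Ideal.mem_of_dvd _ (Finset.dvd_prod_of_mem X hi) (Ideal.subset_span ⟨i, rfl⟩)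

variable [Fintype σ] [DecidableEq σ]

lemma esymm_sub_sqMon_compl_mem_varIdeal (Z : Finset σ) :
    esymm σ K #Zᶜ - sqMon K Zᶜ ∈ varIdeal K Z := by
  have hZ : Zᶜ ∈ Finset.powersetCard #Zᶜ Finset.univ := by simp
  rw [esymm, ← Finset.add_sum_erase _ _ hZ, ← sqMon, add_sub_cancel_left]
  refine sum_mem fun F hF => ?_
  rw [Finset.mem_erase, Finset.mem_powersetCard] at hF
  have hFZ : ¬ F ⊆ Zᶜ := fun h => hF.1 (Finset.eq_of_subset_of_card_le h hF.2.2.ge)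
  obtain ⟨i, hiF, hiZ⟩ := Finset.not_subset.1 hFZ
  exact Ideal.mem_of_dvd _ (Finset.dvd_prod_of_mem X hiF)
    (Ideal.subset_span ⟨i, by simpa using hiZ, rfl⟩)

lemma colon_varIdeal_sqMon_compl (Z : Finset σ) :
    (varIdeal K Z).colon {sqMon K Zᶜ} = varIdeal K Z := by
  rw [← sqVeronese_one, sqVeronese, colon_sqMonIdeal (isUpperSet_setOf_le_card_inter Z 1)]
  congr 1
  ext F
  simp [Finset.union_inter_distrib_right, Finset.inter_comm Zᶜ]

lemma isWeaklyRegular_esymmSeq_varIdeal {Z : Finset σ} {r : ℕ} (hZ : #Zᶜ = r) :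
    IsWeaklyRegular (MvPolynomial σ K ⧸ varIdeal K Z) (esymmSeq σ K r) := by
  induction r generalizing Z with
  | zero => exact .nil _ _
  | succ r ih =>
    have hann : esymm σ K (r + 1) - sqMon K Zᶜ ∈
        Module.annihilator (MvPolynomial σ K) (MvPolynomial σ K ⧸ varIdeal K Z) := by
      rw [Ideal.annihilator_quotient, ← hZ]
      exact esymm_sub_sqMon_compl_mem_varIdeal Z
    rw [esymmSeq_succ, isWeaklyRegular_cons_congr_of_sub_mem_annihilator hann]
    refine isWeaklyRegular_quotient_cons (colon_varIdeal_sqMon_compl Z).le ?_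
    rw [sup_comm, ← sqVeronese_card]
    exact isWeaklyRegular_sqVeronese_sup_varIdeal (fun _ => ih) disjoint_compl_left (by lia)
      (by simp [hZ])

lemma isRegular_esymmSeq_sqVeronese {T : Finset σ} {k : ℕ} (hk : k ≤ #T) :
    IsRegular (MvPolynomial σ K ⧸ sqVeronese K T (k + 1)) (esymmSeq σ K (k + #Tᶜ)) := by
  refine isRegular_quotient_of_forall_mem (idealOfVars_ne_top σ K)
    (sqMonIdeal_le_idealOfVars (by simp)) (fun _ => mem_idealOfVars_of_mem_esymmSeq) ?_
  have hvar : varIdeal K (∅ : Finset σ) = ⊥ := by simp [varIdeal]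
  rw [← sup_bot_eq (sqVeronese K T (k + 1)), ← hvar]
  exact isWeaklyRegular_sqVeronese_sup_varIdeal (fun _ => isWeaklyRegular_esymmSeq_varIdeal)
    (Finset.disjoint_empty_right T) (by lia) (by rw [Finset.union_empty]; lia)

lemma polyDepth_sqVeronese {T : Finset σ} {k : ℕ} (hk : k ≤ #T) :
    polyDepth K (sqVeronese K T (k + 1)) = k + #Tᶜ := by
  have hdim : ringKrullDim (MvPolynomial σ K ⧸ sqVeronese K T (k + 1)) ≤ (k + #Tᶜ : ℕ) := by
    refine ringKrullDim_quotient_sqMonIdeal_le fun F hF => ?_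
    calc #F = #(F ∩ T) + #(F \ T) := (Finset.card_inter_add_card_sdiff F T).symm
      _ ≤ k + #Tᶜ := by
        gcongr
        · simpa [Nat.lt_succ_iff] using hF
        · rw [Finset.sdiff_eq_inter_compl]
          exact Finset.inter_subset_right
  have hlen := length_esymmSeq σ K (k + #Tᶜ)
  rw [polyDepth_eq_of_isRegular (fun _ => mem_idealOfVars_of_mem_esymmSeq)
    (isRegular_esymmSeq_sqVeronese hk) (by rwa [hlen]), hlen]

lemma nDepth_varIdeal {T : Finset σ} {k : ℕ} (hk : 1 ≤ k) (hkT : k ≤ #T) :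
    nDepth K (varIdeal K T) k = #Tᶜ := by
  obtain ⟨k, rfl⟩ := Nat.exists_eq_add_of_le' hk
  rw [nDepth, sqfreePower_varIdeal, indeg_sqVeronese hkT, polyDepth_sqVeronese (by lia)]
  push_cast
  ring

end Esymm

/-- **Lemma 4.3.** Given a positive integer `m`, there exists a squarefree monomial
ideal `I ⊆ K[x₁,…,xₙ]` such that `ν(I) = m` and `g_I(k) = 1` for all `k = 1,…,m`. -/
theorem exists_sqfree_ideal_constant_one_normalized_depth (K : Type) [Field K]
    (m : ℕ) (hm : 1 ≤ m) :
    ∃ (n : ℕ) (I : Ideal (MvPolynomial (Fin n) K)),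
      IsSqfreeMonomialIdeal K I ∧ monGrade K I = m ∧
      ∀ k : ℕ, 1 ≤ k → k ≤ m → nDepth K I k = 1 := by
  have hcard : #({0}ᶜ : Finset (Fin (m + 1))) = m := by simp [Finset.card_compl]
  refine ⟨m + 1, varIdeal K {0}ᶜ, isSqfreeMonomialIdeal_varIdeal K _, ?_, fun k hk hkm => ?_⟩
  · rw [monGrade_varIdeal, hcard]
  · rw [nDepth_varIdeal hk (hkm.trans_eq hcard.symm)]
    simp
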